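/- arXiv:1307.3384 — 3 statements merged into one kernel-verified Lean document; each statement's English description precedes it below -/
import Mathlib

section
/- Let r : ℕ → (0,1) be a function of the final time T with T·r(T) → ∞ as T → ∞, and let p^{(T)}_T be the law at time T of the lazy random walk with rate r(T). Then L_T/√(T·r(T)) converges weakly to the standard normal distribution N(0,1); concretely, for every bounded continuous function g : ℝ → ℝ, Σ_{x∈ℤ} p^{(T)}_T(x) · g(x/√(T·r(T))) → (1/√(2π)) ∫_ℝ g(x) e^{−x²/2} dx as T → ∞. -/
open scoped Real
open Filter Topology

/-- The lazy random walk on `ℤ` with movement rate `r`: probability mass function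
at time `m`, started at the origin. -/
noncomputable def lazyRW (r : ℝ) : ℕ → ℤ → ℝ
  | 0, x => if x = 0 then 1 else 0
  | m + 1, x =>
      (1 - r) * lazyRW r m x + (r / 2) * (lazyRW r m (x - 1) + lazyRW r m (x + 1))

lemma lazyRW_nonneg {r : ℝ} (h0 : 0 ≤ r) (h1 : r ≤ 1) (m : ℕ) (x : ℤ) : 0 ≤ lazyRW r m x := by
  induction m generalizing x with
  | zero => simp only [lazyRW]; split_ifs <;> norm_num
  | succ m ih =>
    simp only [lazyRW]
    have := ih x
    have := ih (x-1)
    have := ih (x+1)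
    have : 0 ≤ 1 - r := by linarith
    positivity

lemma lazyRW_supp (r : ℝ) (m : ℕ) (x : ℤ) (hx : x ∉ Finset.Icc (-(m:ℤ)) m) :
    lazyRW r m x = 0 := by
  induction m generalizing x with
  | zero =>
    simp only [lazyRW]
    rw [if_neg]
    rintro rfl
    simp at hx
  | succ m ih =>
    simp only [lazyRW]
    simp only [Finset.mem_Icc] at hx ih
    push_cast at hx
    rw [ih x (by omega), ih (x-1) (by omega), ih (x+1) (by omega)]
    simp

lemma hasSum_of_eq {f g : ℤ → ℂ} {a b : ℂ} (h1 : f = g) (h2 : a = b) (h : HasSum g b) :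
    HasSum f a := by
  rw [h1, h2]; exact h

lemma lazyRW_hasSum (r : ℝ) (θ : ℝ) (m : ℕ) :
    HasSum (fun x : ℤ => (lazyRW r m x : ℂ) * Complex.exp (x * θ * Complex.I))
      (((1 + r * (Real.cos θ - 1) : ℝ) : ℂ) ^ m) := by
  induction m with
  | zero =>
    have := hasSum_ite_eq (0 : ℤ) (1 : ℂ)
    simp only [pow_zero]
    refine hasSum_of_eq ?_ rfl this
    funext x
    by_cases hx : x = 0 <;> simp [lazyRW, hx]
  | succ m ih =>
    have h1 := ((Equiv.subRight (1 : ℤ)).hasSum_iff.2 ih).mul_left (Complex.exp (θ * Complex.I))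
    have h2 := ((Equiv.addRight (1 : ℤ)).hasSum_iff.2 ih).mul_left (Complex.exp (-θ * Complex.I))
    have h := (ih.mul_left ((1 - r : ℝ) : ℂ)).add ((h1.add h2).mul_left ((r / 2 : ℝ) : ℂ))
    refine hasSum_of_eq ?_ ?_ h
    · funext x
      have e1 : Complex.exp (x * θ * Complex.I) =
        Complex.exp (θ * Complex.I) * Complex.exp (((x - 1 : ℤ) : ℂ) * θ * Complex.I) := by
        rw [← Complex.exp_add]; congr 1; push_cast; ring
      have e2 : Complex.exp (x * θ * Complex.I) =
        Complex.exp (-θ * Complex.I) * Complex.exp (((x + 1 : ℤ) : ℂ) * θ * Complex.I) := by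
        rw [← Complex.exp_add]; congr 1; push_cast; ring
      simp only [lazyRW, Function.comp, Equiv.subRight_apply, Equiv.coe_addRight]
      push_cast at e1 e2 ⊢
      linear_combination (r / 2 * (lazyRW r m (x - 1)) : ℂ) * e1 +
        (r / 2 * (lazyRW r m (x + 1)) : ℂ) * e2
    · have : (Real.cos θ : ℂ) =
        (Complex.exp (θ * Complex.I) + Complex.exp (-θ * Complex.I)) / 2 := by
        rw [Complex.ofReal_cos]; rfl
      push_cast [pow_succ] at this ⊢
      rw [this]; ring

lemma cos_lim (t : ℝ) (n : ℕ → ℝ) (hn : Tendsto n atTop atTop) :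
    Tendsto (fun T => n T * (Real.cos (t / Real.sqrt (n T)) - 1)) atTop (𝓝 (-t ^ 2 / 2)) := by
  have h0 : Tendsto (fun T => t / Real.sqrt (n T) / 2) atTop (𝓝 0) := by
    have := (Tendsto.const_div_atTop (Real.tendsto_sqrt_atTop.comp hn) t).div_const 2
    simpa using this
  have h1 := ((Real.continuous_sinc.tendsto 0).comp h0).pow 2 |>.const_mul (-t ^ 2 / 2)
  simp only [Real.sinc_zero, one_pow, mul_one] at h1
  refine h1.congr' ?_
  filter_upwards [hn.eventually_gt_atTop 0] with T hT
  by_cases ht : t = 0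
  · simp [ht]
  have hs : 0 < Real.sqrt (n T) := Real.sqrt_pos.2 hT
  have hs2 := Real.sq_sqrt hT.le
  set s := Real.sqrt (n T)
  have hne : t / s / 2 ≠ 0 := by positivity
  simp only [Function.comp]
  rw [Real.sinc_of_ne_zero hne]
  have : Real.cos (t / s) = 1 - 2 * Real.sin (t / s / 2) ^ 2 := by
    have := Real.cos_two_mul (t / s / 2)
    have h3 := Real.sin_sq_add_cos_sq (t / s / 2)
    rw [show 2 * (t / s / 2) = t / s by ring] at this
    linarith
  rw [this, ← hs2]
  field_simp
  ring

open MeasureTheory ProbabilityTheory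

/-- rescaled law -/
noncomputable def lazyMeas (r : ℝ) (m : ℕ) (s : ℝ) : Measure ℝ :=
  ∑ x ∈ Finset.Icc (-(m:ℤ)) m, ENNReal.ofReal (lazyRW r m x) • Measure.dirac ((x:ℝ) / s)

instance lazyMeas_fin (r : ℝ) (m : ℕ) (s : ℝ) : IsFiniteMeasure (lazyMeas r m s) := by
  constructor
  simp [lazyMeas, ENNReal.sum_lt_top]

lemma lazyMeas_integral {E : Type*} [NormedAddCommGroup E] [NormedSpace ℝ E] [CompleteSpace E]
    {r : ℝ} (h0 : 0 ≤ r) (h1 : r ≤ 1) (m : ℕ) (s : ℝ) (g : ℝ → E) (hg : Continuous g) :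
    ∫ y, g y ∂(lazyMeas r m s) = ∑' x : ℤ, lazyRW r m x • g ((x : ℝ) / s) := by
  rw [lazyMeas, integral_finsetSum_measure]
  · rw [tsum_eq_sum (s := Finset.Icc (-(m:ℤ)) m)]
    · refine Finset.sum_congr rfl fun x _ => ?_
      rw [integral_smul_measure, integral_dirac, ENNReal.toReal_ofReal (lazyRW_nonneg h0 h1 m x)]
    · intro x hx
      rw [lazyRW_supp r m x hx, zero_smul]
  · intro x _
    refine Integrable.smul_measure ?_ (by simp)
    exact integrable_dirac (by simp)

lemma lazyMeas_charFun {r : ℝ} (h0 : 0 ≤ r) (h1 : r ≤ 1) (m : ℕ) (s t : ℝ) :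
    charFun (lazyMeas r m s) t = ((1 + r * (Real.cos (t / s) - 1) : ℝ) : ℂ) ^ m := by
  rw [charFun_apply_real, lazyMeas_integral h0 h1 _ _ _ (by fun_prop),
    ← (lazyRW_hasSum r (t / s) m).tsum_eq]
  congr 1; funext x
  rw [Complex.real_smul]
  congr 2
  push_cast; ring

lemma lazyMeas_prob {r : ℝ} (h0 : 0 ≤ r) (h1 : r ≤ 1) (m : ℕ) (s : ℝ) :
    IsProbabilityMeasure (lazyMeas r m s) := by
  have h := lazyMeas_charFun h0 h1 m s 0
  rw [charFun_zero] at h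
  simp at h
  exact ⟨by simpa [Measure.real, ENNReal.toReal_eq_one_iff] using h⟩

theorem lazy_rw_clt (r : ℕ → ℝ) (hr : ∀ T : ℕ, r T ∈ Set.Ioo (0 : ℝ) 1)
    (hlim : Tendsto (fun T : ℕ => (T : ℝ) * r T) atTop atTop) :
    ∀ g : ℝ → ℝ, Continuous g → (∃ M : ℝ, ∀ x : ℝ, |g x| ≤ M) →
      Tendsto
        (fun T : ℕ => ∑' x : ℤ, lazyRW (r T) T x * g ((x : ℝ) / Real.sqrt ((T : ℝ) * r T)))
        atTop
        (𝓝 ((1 / Real.sqrt (2 * π)) * ∫ x : ℝ, g x * Real.exp (-x ^ 2 / 2))) := by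
  rintro g hg ⟨M, hM⟩
  let μ : ℕ → ProbabilityMeasure ℝ := fun T =>
    ⟨lazyMeas (r T) T (Real.sqrt ((T : ℝ) * r T)), lazyMeas_prob (hr T).1.le (hr T).2.le _ _⟩
  let ν : ProbabilityMeasure ℝ := ⟨gaussianReal 0 1, inferInstance⟩
  have hw : Tendsto μ atTop (𝓝 ν) := by
    refine ProbabilityMeasure.tendsto_iff_tendsto_charFun.2 fun t => ?_
    have hc := cos_lim t _ hlim
    have hp := Real.tendsto_one_add_pow_exp_of_tendsto
      (g := fun T => r T * (Real.cos (t / Real.sqrt ((T : ℝ) * r T)) - 1)) (t := -t ^ 2 / 2)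
      (hc.congr fun T => by ring)
    have hp2 := (Complex.continuous_ofReal.tendsto _).comp hp
    have e : charFun (ν : Measure ℝ) t = ((Real.exp (-t ^ 2 / 2) : ℝ) : ℂ) := by
      change charFun (gaussianReal 0 1) t = _
      rw [charFun_gaussianReal]
      push_cast
      congr 1
      simp; ring
    rw [e]
    refine hp2.congr fun T => ?_
    change _ = charFun (lazyMeas _ _ _) t
    rw [lazyMeas_charFun (hr T).1.le (hr T).2.le]
    simp
  have h := ProbabilityMeasure.tendsto_iff_forall_integral_tendsto.1 hw
    (BoundedContinuousFunction.ofNormedAddCommGroup g hg M hM)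
  have e : ∫ x, g x ∂(gaussianReal 0 1) =
      (1 / Real.sqrt (2 * π)) * ∫ x : ℝ, g x * Real.exp (-x ^ 2 / 2) := by
    rw [integral_gaussianReal_eq_integral_smul (by simp), ← integral_const_mul]
    congr 1; funext x
    simp [gaussianPDFReal]
    ring
  rw [← e]
  refine h.congr fun T => ?_
  change ∫ y, g y ∂(lazyMeas _ _ _) = _
  rw [lazyMeas_integral (hr T).1.le (hr T).2.le _ _ _ hg]
  rfl
end

section
/- Fix 0 < r < 1 and set r(T) := r/T. Let p^{(T)}_T be the law at time T of the lazy random walk with rate r(T). Then for every x ∈ ℤ, p^{(T)}_T(x) → e^{−r} · I_{|x|}(r) as T → ∞, where I_ν is the modified Bessel function of the first kind of integer order ν ≥ 0, I_ν(z) = Σ_{m=0}^∞ (z/2)^{2m+ν}/(m!(m+ν)!). -/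
open scoped Real
open Filter Topology

/-- Modified Bessel function of the first kind of integer order `ν ≥ 0`:
`I_ν(z) = Σ_{m=0}^∞ (z/2)^(2m+ν) / (m! (m+ν)!)`. -/
noncomputable def besselI (ν : ℕ) (z : ℝ) : ℝ :=
  ∑' m : ℕ, (z / 2) ^ (2 * m + ν) / ((m.factorial : ℝ) * ((m + ν).factorial : ℝ))


noncomputable def walkAvg : Module.End ℝ (ℤ → ℝ) where
  toFun f := fun x => (f (x - 1) + f (x + 1)) / 2
  map_add' f g := by funext x; simp; ring
  map_smul' c f := by funext x; simp; ring

lemma lazyRW_eq_pow (ρ : ℝ) (n : ℕ) :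
    lazyRW ρ n = ((ρ • walkAvg + (1 - ρ) • (1 : Module.End ℝ (ℤ → ℝ))) ^ n)
      (fun x => if x = 0 then 1 else 0) := by
  induction n with
  | zero => funext x; simp [lazyRW]
  | succ n ih =>
    rw [pow_succ', Module.End.mul_apply, ← ih]
    funext x
    simp [lazyRW, walkAvg]
    ring

lemma lazyRW_one_eq_pow (n : ℕ) :
    lazyRW 1 n = (walkAvg ^ n) (fun x => if x = 0 then 1 else 0) := by
  rw [lazyRW_eq_pow]; simp

lemma lazyRW_binom (ρ : ℝ) (n : ℕ) (x : ℤ) :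
    lazyRW ρ n x = ∑ k ∈ Finset.range (n + 1),
      ((n.choose k : ℝ) * ρ ^ k * (1 - ρ) ^ (n - k)) * lazyRW 1 k x := by
  have hc : Commute (ρ • walkAvg) ((1 - ρ) • (1 : Module.End ℝ (ℤ → ℝ))) :=
    ((Commute.one_right walkAvg).smul_right _).smul_left _
  rw [lazyRW_eq_pow, hc.add_pow, LinearMap.sum_apply, Finset.sum_apply]
  refine Finset.sum_congr rfl fun k _ => ?_
  rw [lazyRW_one_eq_pow, smul_pow, smul_pow, one_pow, ← nsmul_eq_mul']
  simp
  ring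

lemma srw_bounds (k : ℕ) : ∀ x : ℤ, 0 ≤ lazyRW 1 k x ∧ lazyRW 1 k x ≤ 1 := by
  induction k with
  | zero => intro x; simp only [lazyRW]; split_ifs <;> norm_num
  | succ k ih =>
    intro x
    have h1 := ih (x - 1)
    have h2 := ih (x + 1)
    simp only [lazyRW]
    constructor <;> linarith

lemma srw_zero (k : ℕ) : ∀ x : ℤ, (x < -k ∨ (x + k) % 2 ≠ 0) → lazyRW 1 k x = 0 := by
  induction k with
  | zero => intro x hx; simp only [lazyRW]; rw [if_neg]; rintro rfl; simp at hx
  | succ k ih =>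
    intro x hx
    push_cast at hx
    simp only [lazyRW]
    rw [ih (x - 1) (by omega), ih (x + 1) (by omega)]
    simp

lemma srw_choose (k : ℕ) : ∀ j : ℕ, lazyRW 1 k (2 * j - k) = (k.choose j : ℝ) / 2 ^ k := by
  induction k with
  | zero => intro j; cases j <;> simp [lazyRW]; omega
  | succ k ih =>
    intro j
    simp only [lazyRW]
    have e2 : (2 * (j : ℤ) - ((k + 1 : ℕ) : ℤ) + 1) = 2 * j - k := by push_cast; ring
    rw [e2, ih j]
    cases j with
    | zero =>
      rw [srw_zero k (2 * ((0 : ℕ) : ℤ) - ((k + 1 : ℕ) : ℤ) - 1) (by left; push_cast; omega)]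
      simp
      field_simp
      try ring
    | succ j =>
      have e1 : (2 * ((j + 1 : ℕ) : ℤ) - ((k + 1 : ℕ) : ℤ) - 1) = 2 * j - k := by
        push_cast; ring
      rw [e1, ih j, Nat.choose_succ_succ]
      push_cast
      field_simp
      ring

lemma srw_term (r : ℝ) (x : ℤ) (m : ℕ) :
    r ^ (2 * m + x.natAbs) / ((2 * m + x.natAbs).factorial : ℝ) * lazyRW 1 (2 * m + x.natAbs) x =
    (r / 2) ^ (2 * m + x.natAbs) / ((m.factorial : ℝ) * ((m + x.natAbs).factorial : ℝ)) := by
  have key : lazyRW 1 (2 * m + x.natAbs) x =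
      ((2 * m + x.natAbs).choose m : ℝ) / 2 ^ (2 * m + x.natAbs) := by
    rcases le_total 0 x with hx | hx
    · have e : x = 2 * ((m + x.natAbs : ℕ) : ℤ) - ((2 * m + x.natAbs : ℕ) : ℤ) := by
        omega
      have := srw_choose (2 * m + x.natAbs) (m + x.natAbs)
      rw [← e] at this
      rw [this, Nat.choose_symm_of_eq_add (show 2 * m + x.natAbs = (m + x.natAbs) + m by ring)]
    · have e : x = 2 * (m : ℤ) - ((2 * m + x.natAbs : ℕ) : ℤ) := by
        omega
      have := srw_choose (2 * m + x.natAbs) m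
      rwa [← e] at this
  have hf := Nat.choose_mul_factorial_mul_factorial (show m ≤ 2 * m + x.natAbs by omega)
  rw [show 2 * m + x.natAbs - m = m + x.natAbs by omega] at hf
  have hf' : ((2 * m + x.natAbs).choose m : ℝ) * m.factorial * (m + x.natAbs).factorial
      = (2 * m + x.natAbs).factorial := by exact_mod_cast hf
  rw [key, div_pow, ← hf']
  have h1 : ((2 * m + x.natAbs).choose m : ℝ) ≠ 0 := by
    exact_mod_cast (Nat.choose_pos (show m ≤ 2 * m + x.natAbs by omega)).ne'
  have h2 : (m.factorial : ℝ) ≠ 0 := by positivity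
  have h3 : ((m + x.natAbs).factorial : ℝ) ≠ 0 := by positivity
  field_simp

lemma srw_tsum (r : ℝ) (x : ℤ) :
    ∑' k : ℕ, r ^ k / (k.factorial : ℝ) * lazyRW 1 k x = besselI x.natAbs r := by
  have hi : Function.Injective (fun m : ℕ => 2 * m + x.natAbs) := by
    intro a b h; simp at h; exact h
  rw [besselI, ← hi.tsum_eq]
  · exact tsum_congr fun m => srw_term r x m
  · intro k hk
    rw [Function.mem_support] at hk
    have hq : lazyRW 1 k x ≠ 0 := right_ne_zero_of_mul hk
    have h1 : ¬ (x < -k ∨ (x + k) % 2 ≠ 0) := fun h => hq (srw_zero k x h)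
    have h2 : x ≤ k := by
      by_contra h
      apply hq
      have e : x = 2 * (((x + k) / 2).toNat : ℤ) - k := by omega
      rw [e, srw_choose, Nat.choose_eq_zero_of_lt (by omega)]
      simp
    refine ⟨(k - x.natAbs) / 2, ?_⟩
    simp only
    omega

/-- Localized regime `r(T) = r / T`: the law of the lazy random walk at the final time
converges pointwise to `e^{-r} I_{|x|}(r)`. -/
theorem lazy_rw_bessel_limit (r : ℝ) (hr0 : 0 < r) (hr1 : r < 1) :
    ∀ x : ℤ,
      Tendsto (fun T : ℕ => lazyRW (r / (T : ℝ)) T x) atTop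
        (𝓝 (Real.exp (-r) * besselI x.natAbs r)) := by
  intro x
  have hlim : Tendsto (fun T : ℕ => ∑' k : ℕ,
      ((T.choose k : ℝ) * (r / T) ^ k * (1 - r / T) ^ (T - k)) * lazyRW 1 k x) atTop
      (𝓝 (∑' k : ℕ, Real.exp (-r) * r ^ k / k.factorial * lazyRW 1 k x)) := by
    refine tendsto_tsum_of_dominated_convergence (Real.summable_pow_div_factorial r) ?_ ?_
    · intro k
      refine Tendsto.mul_const _ ?_
      refine ProbabilityTheory.tendsto_choose_mul_pow_of_tendsto_mul_atTop k
        (p := fun T : ℕ => r / (T : ℝ)) ?_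
      refine tendsto_const_nhds.congr' ?_
      filter_upwards [eventually_ge_atTop 1] with T hT
      have : (T : ℝ) ≠ 0 := by positivity
      field_simp
    · filter_upwards [eventually_ge_atTop 1] with T hT k
      have hT' : (1 : ℝ) ≤ T := by exact_mod_cast hT
      have hp0 : 0 ≤ r / T := by positivity
      have hp1 : r / T ≤ 1 := by rw [div_le_one (by linarith)]; linarith
      have hq := srw_bounds k x
      have ha : 0 ≤ (T.choose k : ℝ) * (r / T) ^ k := by positivity
      have hb : (T.choose k : ℝ) * (r / T) ^ k ≤ r ^ k / k.factorial := by
        calc (T.choose k : ℝ) * (r / T) ^ k ≤ (T : ℝ) ^ k / k.factorial * (r / T) ^ k := by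
              gcongr; exact Nat.choose_le_pow_div k T
          _ = r ^ k / k.factorial := by
              rw [div_pow]
              have : (T : ℝ) ≠ 0 := by positivity
              field_simp
      have hc0 : 0 ≤ (1 - r / T) ^ (T - k) := pow_nonneg (by linarith) _
      have hc1 : (1 - r / T) ^ (T - k) ≤ 1 := pow_le_one₀ (by linarith) (by linarith)
      rw [Real.norm_of_nonneg (mul_nonneg (mul_nonneg ha hc0) hq.1)]
      calc _ ≤ (T.choose k : ℝ) * (r / T) ^ k * (1 - r / T) ^ (T - k) :=
            mul_le_of_le_one_right (mul_nonneg ha hc0) hq.2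
        _ ≤ (T.choose k : ℝ) * (r / T) ^ k := mul_le_of_le_one_right ha hc1
        _ ≤ _ := hb
  have e : (∑' k : ℕ, Real.exp (-r) * r ^ k / k.factorial * lazyRW 1 k x) =
      Real.exp (-r) * besselI x.natAbs r := by
    rw [← srw_tsum, ← tsum_mul_left]
    exact tsum_congr fun k => by ring
  rw [← e]
  refine hlim.congr fun T => ?_
  rw [lazyRW_binom, tsum_eq_sum]
  intro k hk
  rw [Nat.choose_eq_zero_of_lt (by simpa using hk)]
  simp
end

section
/- Let r : ℕ → (0,1) satisfy T·r(T) → 0 as T → ∞, and set t_T := T·√(r(T)). For k ∈ ℝ, let Ĉ_{r(T)}(k) := [[e^{−ik}√(r(T)), e^{−ik}√(1−r(T))],[e^{ik}√(1−r(T)), −e^{ik}√(r(T))]] and V(k) := [[0, e^{−ik}],[e^{ik}, 0]]. Then for every k ∈ ℝ, the matrices (Ĉ_{r(T)}(k))^T − (1/2)·[e^{−i t_T sin k}(I + V(k)) + (−1)^T e^{+i t_T sin k}(I − V(k))] converge to the zero matrix (entrywise) as T → ∞. -/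
open scoped Real
open Filter Topology

/-- Fourier transform of one step of the walk with the final-time-dependent coin:
`Ĉ_r(k) = [[e^{-ik}√r, e^{-ik}√(1-r)],[e^{ik}√(1-r), -e^{ik}√r]]`. -/
noncomputable def Chat (r k : ℝ) : Matrix (Fin 2) (Fin 2) ℂ :=
  !![Complex.exp (-Complex.I * k) * Real.sqrt r,
     Complex.exp (-Complex.I * k) * Real.sqrt (1 - r);
     Complex.exp (Complex.I * k) * Real.sqrt (1 - r),
     -Complex.exp (Complex.I * k) * Real.sqrt r]

/-- `V(k) = [[0, e^{-ik}],[e^{ik}, 0]]`. -/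
noncomputable def Vmat (k : ℝ) : Matrix (Fin 2) (Fin 2) ℂ :=
  !![0, Complex.exp (-Complex.I * k); Complex.exp (Complex.I * k), 0]

lemma aux_pow (C : Matrix (Fin 2) (Fin 2) ℂ) (a b : ℂ) (hab : a * b = 1)
    (hC : C * C = (a - b) • C + 1) (n : ℕ) :
    (a + b) • C ^ n = a ^ n • (C + b • 1) + ((-1) ^ n * b ^ n) • (a • 1 - C) := by
  induction n with
  | zero =>
    simp only [pow_zero, one_mul, one_smul, add_smul]
    abel
  | succ n ih =>
    have h1 : (C + b • 1) * C = a • (C + b • 1) := by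
      rw [add_mul, hC, smul_add, smul_smul, hab, sub_smul, smul_mul_assoc, one_mul, one_smul]
      abel
    have h2 : (a • 1 - C) * C = (-b) • (a • 1 - C) := by
      rw [sub_mul, hC, smul_sub, smul_smul, neg_mul, mul_comm b a, hab, sub_smul,
        smul_mul_assoc, one_mul, neg_smul, neg_smul, one_smul]
      abel
    rw [pow_succ C, ← smul_mul_assoc, ih, add_mul, smul_mul_assoc, smul_mul_assoc, h1, h2,
      smul_smul, smul_smul]
    congr 2
    ring

lemma aux_lim (u v x : ℕ → ℂ) (y : ℂ) (hu : ∀ n, ‖u n‖ ≤ 1)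
    (huv : Tendsto (fun n => u n - v n) atTop (𝓝 0)) (hx : Tendsto x atTop (𝓝 y)) :
    Tendsto (fun n => u n * x n - v n * y) atTop (𝓝 0) := by
  have h1 : Tendsto (fun n => u n * (x n - y)) atTop (𝓝 0) := by
    have hx' : Tendsto (fun n => x n - y) atTop (𝓝 0) := by
      simpa using hx.sub_const y
    refine squeeze_zero_norm (fun n => ?_) (tendsto_norm_zero.comp hx')
    rw [norm_mul]
    exact mul_le_of_le_one_left (norm_nonneg _) (hu n)
  have h2 := h1.add (huv.mul_const y)
  simp only [zero_mul, add_zero] at h2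
  refine h2.congr (fun n => ?_)
  ring

lemma aux_arcsin (s : ℝ) (hs : |s| ≤ 1) (h : |Real.arcsin s| ≤ 1) :
    |Real.arcsin s - s| ≤ 2 * s ^ 2 := by
  have hb := Real.sin_bound h
  rw [Real.sin_arcsin (by linarith [neg_abs_le s]) (by linarith [le_abs_self s])] at hb
  set θ := Real.arcsin s
  have h0 := abs_nonneg θ
  have e3 : |θ ^ 3| = |θ| ^ 3 := abs_pow _ _
  have hd : |θ - s| ≤ |θ| ^ 3 / 6 + |θ| ^ 5 / 100 := by
    have : θ - s = θ ^ 3 / 6 - (s - (θ - θ ^ 3 / 6)) := by ring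
    rw [this]
    refine (abs_sub _ _).trans ?_
    rw [abs_div, e3, abs_of_pos (by norm_num : (0:ℝ) < 6)]
    linarith
  have p3 : |θ| ^ 3 ≤ |θ| ^ 2 := pow_le_pow_of_le_one h0 h (by norm_num)
  have p4 : |θ| ^ 5 ≤ |θ| ^ 2 := pow_le_pow_of_le_one h0 h (by norm_num)
  have p2 : |θ| ^ 2 ≤ |θ| := by nlinarith
  have hd2 : |θ - s| ≤ |θ| ^ 2 / 4 := by nlinarith
  have tri : |θ| ≤ |s| + |θ - s| := by
    have := abs_add_le s (θ - s)
    simpa using this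
  have h4 : |θ| ≤ 4 / 3 * |s| := by linarith
  have : |θ| ^ 2 ≤ (4 / 3 * |s|) ^ 2 := pow_le_pow_left₀ h0 h4 2
  rw [mul_pow, sq_abs s] at this
  nlinarith [sq_nonneg s]

lemma aux_exp (c : ℂ) (x y : ℕ → ℝ) (hc : c = Complex.I ∨ c = -Complex.I)
    (h : Tendsto (fun n => x n - y n) atTop (𝓝 0)) :
    Tendsto (fun n => Complex.exp (c * x n) - Complex.exp (c * y n)) atTop (𝓝 0) := by
  have h1 : Tendsto (fun n => Complex.exp (c * ((x n - y n : ℝ) : ℂ)) - 1) atTop (𝓝 0) := by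
    have hcont : Continuous (fun z : ℝ => Complex.exp (c * (z : ℂ)) - 1) := by fun_prop
    have := (hcont.tendsto 0).comp h
    simpa [Function.comp_def] using this
  refine squeeze_zero_norm (fun n => ?_) (tendsto_norm_zero.comp h1)
  have hn : ‖Complex.exp (c * y n)‖ = 1 := by
    rw [Complex.norm_exp]
    rcases hc with rfl | rfl <;> simp
  have : Complex.exp (c * x n) - Complex.exp (c * y n)
      = Complex.exp (c * y n) * (Complex.exp (c * ((x n - y n : ℝ) : ℂ)) - 1) := by
    rw [mul_sub, ← Complex.exp_add, mul_one]
    congr 2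
    push_cast
    ring
  rw [this, norm_mul, hn, one_mul]
  rfl

lemma Chat_sq (r k θ : ℝ) (h0 : 0 < r) (h1 : r < 1) (hs : Real.sin θ = √r * Real.sin k) :
    Chat r k * Chat r k =
      (Complex.exp (-Complex.I * θ) - Complex.exp (Complex.I * θ)) • Chat r k + 1 := by
  have e : ∀ z : ℝ, Complex.exp (Complex.I * z) - Complex.exp (-Complex.I * z)
      = 2 * Complex.I * (Real.sin z : ℂ) := by
    intro z
    rw [Complex.ofReal_sin, Complex.sin]
    have h1 : Complex.I * (z:ℂ) = z * Complex.I := mul_comm _ _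
    have h2 : -Complex.I * (z:ℂ) = -z * Complex.I := by ring
    rw [h1, h2]
    linear_combination (-(Complex.exp (-z * Complex.I) - Complex.exp (z * Complex.I))) * Complex.I_sq
  have hab : Complex.exp (-Complex.I * θ) - Complex.exp (Complex.I * θ)
      = (√r : ℂ) * (Complex.exp (-Complex.I * k) - Complex.exp (Complex.I * k)) := by
    have e1 := e θ
    have e2 := e k
    rw [hs] at e1
    push_cast at e1 e2
    linear_combination -e1 + (√r : ℂ) * e2
  rw [hab]
  have hpq : Complex.exp (-Complex.I * k) * Complex.exp (Complex.I * k) = 1 := by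
    rw [← Complex.exp_add]; simp
  have hx : (√r : ℂ) ^ 2 + (√(1 - r) : ℂ) ^ 2 = 1 := by
    norm_cast
    rw [Real.sq_sqrt h0.le, Real.sq_sqrt (by linarith)]; ring
  unfold Chat
  set p := Complex.exp (-Complex.I * k)
  set q := Complex.exp (Complex.I * k)
  set x := (√r : ℂ)
  set y := (√(1 - r) : ℂ)
  ext i j
  fin_cases i <;> fin_cases j <;> simp [Matrix.mul_apply, Fin.sum_univ_two]
  · linear_combination (x ^ 2 + y ^ 2) * hpq + hx
  · ring
  · ring
  · linear_combination (x ^ 2 + y ^ 2) * hpq + hx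

/-- If `T·r(T) → 0`, then `Ĉ_{r(T)}(k)^T` is entrywise asymptotic to
`(1/2)[e^{-i t_T sin k}(I + V(k)) + (-1)^T e^{i t_T sin k}(I - V(k))]`
with `t_T = T √(r(T))`. -/
theorem Chat_pow_asymptotics (r : ℕ → ℝ) (hr : ∀ T : ℕ, r T ∈ Set.Ioo (0 : ℝ) 1)
    (hlim : Tendsto (fun T : ℕ => (T : ℝ) * r T) atTop (𝓝 0)) (k : ℝ) :
    ∀ i j : Fin 2,
      Tendsto
        (fun T : ℕ =>
          ((Chat (r T) k) ^ T -
            (1 / 2 : ℂ) •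
              (Complex.exp (-Complex.I * ((T : ℝ) * Real.sqrt (r T)) * Real.sin k) •
                  (1 + Vmat k) +
                (-1 : ℂ) ^ T •
                  (Complex.exp (Complex.I * ((T : ℝ) * Real.sqrt (r T)) * Real.sin k) •
                    (1 - Vmat k)))) i j)
        atTop (𝓝 0) := by
  intro i j
  have hr0 : Tendsto r atTop (𝓝 0) := by
    refine squeeze_zero' (Eventually.of_forall fun T => (hr T).1.le) ?_ hlim
    filter_upwards [eventually_ge_atTop 1] with T hT
    have : (1:ℝ) ≤ T := by exact_mod_cast hT
    exact le_mul_of_one_le_left (hr T).1.le this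
  have hsq : Tendsto (fun T => √(r T)) atTop (𝓝 0) := by
    simpa using hr0.sqrt
  have hs0 : Tendsto (fun T => √(r T) * Real.sin k) atTop (𝓝 0) := by
    simpa using hsq.mul_const (Real.sin k)
  have hsle : ∀ T, |√(r T) * Real.sin k| ≤ √(r T) := fun T => by
    rw [abs_mul, abs_of_nonneg (Real.sqrt_nonneg _)]
    exact mul_le_of_le_one_right (Real.sqrt_nonneg _) (Real.abs_sin_le_one k)
  have hs1 : ∀ T, |√(r T) * Real.sin k| ≤ 1 := fun T =>
    (hsle T).trans (Real.sqrt_le_one.2 (hr T).2.le)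
  have hs2 : ∀ T, (√(r T) * Real.sin k) ^ 2 ≤ r T := fun T => by
    have := pow_le_pow_left₀ (abs_nonneg _) (hsle T) 2
    rwa [sq_abs, Real.sq_sqrt (hr T).1.le] at this
  obtain ⟨θ, hθ⟩ : ∃ θ : ℕ → ℝ, ∀ T, θ T = Real.arcsin (√(r T) * Real.sin k) := ⟨_, fun _ => rfl⟩
  have hθ0 : Tendsto θ atTop (𝓝 0) := by
    have := (Real.continuous_arcsin.tendsto 0).comp hs0
    rw [Real.arcsin_zero] at this
    exact this.congr fun T => (hθ T).symm
  have hsin : ∀ T, Real.sin (θ T) = √(r T) * Real.sin k := fun T => by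
    rw [hθ]
    exact Real.sin_arcsin (abs_le.1 (hs1 T)).1 (abs_le.1 (hs1 T)).2
  have hdiff : Tendsto (fun T : ℕ => (T * θ T : ℝ) - T * √(r T) * Real.sin k) atTop (𝓝 0) := by
    have h2 : Tendsto (fun T : ℕ => 2 * ((T : ℝ) * r T)) atTop (𝓝 0) := by
      simpa using hlim.const_mul 2
    refine squeeze_zero_norm' ?_ h2
    have hev : ∀ᶠ T in atTop, |θ T| < 1 := by
      have := hθ0.abs
      rw [abs_zero] at this
      exact this.eventually_lt_const one_pos
    filter_upwards [hev] with T hT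
    have hb := aux_arcsin _ (hs1 T) (by rw [← hθ]; exact hT.le)
    rw [← hθ] at hb
    have hT0 : (0:ℝ) ≤ T := Nat.cast_nonneg T
    rw [Real.norm_eq_abs, mul_assoc, ← mul_sub, abs_mul, abs_of_nonneg hT0]
    have : |θ T - √(r T) * Real.sin k| ≤ 2 * r T := by linarith [hs2 T]
    nlinarith
  have hA := aux_exp (-Complex.I) _ _ (Or.inr rfl) hdiff
  have hB := aux_exp (Complex.I) _ _ (Or.inl rfl) hdiff
  -- convergence of a, b
  have ha : Tendsto (fun T => Complex.exp (-Complex.I * θ T)) atTop (𝓝 1) := by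
    have hc : Continuous (fun z : ℝ => Complex.exp (-Complex.I * (z:ℂ))) := by fun_prop
    simpa [Function.comp_def] using (hc.tendsto 0).comp hθ0
  have hb : Tendsto (fun T => Complex.exp (Complex.I * θ T)) atTop (𝓝 1) := by
    have hc : Continuous (fun z : ℝ => Complex.exp (Complex.I * (z:ℂ))) := by fun_prop
    simpa [Function.comp_def] using (hc.tendsto 0).comp hθ0
  have hab := ha.add hb
  have hinv := hab.inv₀ (by norm_num)
  have hC : Tendsto (fun T => Chat (r T) k i j) atTop (𝓝 (Vmat k i j)) := by
    have hx : Tendsto (fun T => (√(r T) : ℂ)) atTop (𝓝 0) := by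
      simpa [Function.comp_def] using (Complex.continuous_ofReal.tendsto 0).comp hsq
    have hy : Tendsto (fun T => (√(1 - r T) : ℂ)) atTop (𝓝 1) := by
      have : Tendsto (fun T => √(1 - r T)) atTop (𝓝 1) := by
        simpa using (hr0.const_sub 1).sqrt
      simpa [Function.comp_def] using (Complex.continuous_ofReal.tendsto 1).comp this
    fin_cases i <;> fin_cases j <;> simp only [Chat, Vmat]
    · simpa using hx.const_mul (Complex.exp (-Complex.I * k))
    · simpa using hy.const_mul (Complex.exp (-Complex.I * k))
    · simpa using hy.const_mul (Complex.exp (Complex.I * k))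
    · simpa using hx.const_mul (-Complex.exp (Complex.I * k))
  have hX : Tendsto (fun T => (Complex.exp (-Complex.I * θ T) + Complex.exp (Complex.I * θ T))⁻¹ *
      (Chat (r T) k i j + Complex.exp (Complex.I * θ T) * (1 : Matrix (Fin 2) (Fin 2) ℂ) i j))
      atTop (𝓝 ((1 + 1)⁻¹ * (Vmat k i j + 1 * (1 : Matrix (Fin 2) (Fin 2) ℂ) i j))) :=
    hinv.mul (hC.add (hb.mul_const _))
  have hY : Tendsto (fun T => (Complex.exp (-Complex.I * θ T) + Complex.exp (Complex.I * θ T))⁻¹ *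
      (Complex.exp (-Complex.I * θ T) * (1 : Matrix (Fin 2) (Fin 2) ℂ) i j - Chat (r T) k i j))
      atTop (𝓝 ((1 + 1)⁻¹ * (1 * (1 : Matrix (Fin 2) (Fin 2) ℂ) i j - Vmat k i j))) :=
    hinv.mul ((ha.mul_const _).sub hC)
  have hB' : Tendsto (fun T : ℕ => (-1 : ℂ) ^ T * Complex.exp (Complex.I * ((T * θ T : ℝ) : ℂ))
      - (-1 : ℂ) ^ T * Complex.exp (Complex.I * ((T * √(r T) * Real.sin k : ℝ) : ℂ)))
      atTop (𝓝 0) := by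
    refine squeeze_zero_norm (fun n => ?_) (tendsto_norm_zero.comp hB)
    rw [← mul_sub, norm_mul]
    simp
  have L1 := aux_lim _ _ _ _ (fun n => by rw [Complex.norm_exp]; simp) hA hX
  have L2 := aux_lim _ _ _ _ (fun n => by rw [norm_mul, Complex.norm_exp]; simp) hB' hY
  have L := L1.add L2
  rw [add_zero] at L
  refine L.congr' ?_
  have hne := hab.eventually_ne (by norm_num : (1 + 1 : ℂ) ≠ 0)
  filter_upwards [hne] with T hT
  have hP := aux_pow (Chat (r T) k) (Complex.exp (-Complex.I * θ T)) (Complex.exp (Complex.I * θ T))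
    (by rw [← Complex.exp_add]; simp) (Chat_sq _ _ _ (hr T).1 (hr T).2 (hsin T)) T
  have hP' := congrFun (congrFun hP i) j
  simp only [Matrix.add_apply, Matrix.smul_apply, Matrix.sub_apply, smul_eq_mul] at hP' ⊢
  rw [← Complex.exp_nat_mul, ← Complex.exp_nat_mul] at hP'
  have q1 : Complex.exp (-Complex.I * ((T * θ T : ℝ) : ℂ)) = Complex.exp (T * (-Complex.I * θ T)) := by
    congr 1; push_cast; ring
  have q2 : Complex.exp (Complex.I * ((T * θ T : ℝ) : ℂ)) = Complex.exp (T * (Complex.I * θ T)) := by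
    congr 1; push_cast; ring
  have q3 : Complex.exp (-Complex.I * ((T * √(r T) * Real.sin k : ℝ) : ℂ))
      = Complex.exp (-Complex.I * (((T : ℝ) : ℂ) * (√(r T) : ℂ)) * (Real.sin k : ℂ)) := by
    congr 1; push_cast; ring
  have q4 : Complex.exp (Complex.I * ((T * √(r T) * Real.sin k : ℝ) : ℂ))
      = Complex.exp (Complex.I * (((T : ℝ) : ℂ) * (√(r T) : ℂ)) * (Real.sin k : ℂ)) := by
    congr 1; push_cast; ring
  rw [q1, q2, q3, q4]
  rw [← eq_inv_mul_iff_mul_eq₀ hT] at hP'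
  rw [hP']
  ring
end
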